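/- arXiv:2512.16486 — 2 statements merged into one kernel-verified Lean document; each statement's English description precedes it below -/
import Mathlib

section
/- Enhanced comparison inequalities (Theorem 1.1). Let (V, E, ends, α) be a finite graph with boundary condition such that the wired graph G∪α is connected, the quotient V/α has at least two elements, and G∪α is not a forest (it contains a cycle, where a self-loop or a pair of parallel edges counts as a cycle). Let p ∈ (0,1) and q > 0 with q ≠ 1. Then there exist families (ε_e)_{e∈E} ∈ [0,1]^E and (ε'_e)_{e∈E} ∈ [0,1]^E, each of which is nonzero at at least one edge, such that P_{(min(p,p')+ε_e)_{e∈E}} ≼ φ^α_{G,p,q} ≼ P_{(max(p,p')−ε'_e)_{e∈E}}. -/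
open scoped Classical

noncomputable section

namespace FKPaper

variable {V E : Type*}

/-- One-step adjacency between wired vertices through an edge in `F`. -/
def Step (ends : E → Sym2 V) (α : Setoid V) (F : Set E) (x y : Quotient α) : Prop :=
  ∃ e ∈ F, Sym2.map (Quotient.mk α) (ends e) = s(x, y)

/-- Setoid of connected components of the wired multigraph with edge set `F`. -/
def connSetoid (ends : E → Sym2 V) (α : Setoid V) (F : Set E) : Setoid (Quotient α) :=
  Relation.EqvGen.setoid (Step ends α F)

/-- Connectivity in the wired multigraph with edge set `F`. -/
def Conn (ends : E → Sym2 V) (α : Setoid V) (F : Set E) (x y : Quotient α) : Prop :=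
  (connSetoid ends α F).r x y

/-- The two endpoints of `e` are joined in the wired multigraph with edge set `F`. -/
def EndsConn (ends : E → Sym2 V) (α : Setoid V) (F : Set E) (e : E) : Prop :=
  ∀ x y : V, ends e = s(x, y) → Conn ends α F (Quotient.mk α x) (Quotient.mk α y)

/-- Number of connected components `k(ω, α)`. -/
def numComponents (ends : E → Sym2 V) (α : Setoid V) (ω : E → Bool) : ℕ :=
  Nat.card (Quotient (connSetoid ends α {e | ω e = true}))

/-- `p' = p / (p + q (1 - p))`. -/
def pPrime (p q : ℝ) : ℝ := p / (p + q * (1 - p))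

/-- Total mass of a set under a weight function. -/
def massOf {ι : Type*} [Fintype ι] (w : ι → ℝ) (A : Set ι) : ℝ :=
  ∑ x ∈ Finset.univ.filter (· ∈ A), w x

/-- Normalized probability of a set under a weight function. -/
def probOf {ι : Type*} [Fintype ι] (w : ι → ℝ) (A : Set ι) : ℝ :=
  massOf w A / massOf w Set.univ

/-- FK weight of a configuration. -/
def fkWeight [Fintype E] (ends : E → Sym2 V) (α : Setoid V) (p q : ℝ) (ω : E → Bool) : ℝ :=
  p ^ (Finset.univ.filter fun e => ω e = true).card *
    (1 - p) ^ (Finset.univ.filter fun e => ω e = false).card *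
    q ^ numComponents ends α ω

/-- The FK (random cluster) probability measure `φ^α_{G,p,q}`. -/
def fkProb [Fintype E] (ends : E → Sym2 V) (α : Setoid V) (p q : ℝ)
    (A : Set (E → Bool)) : ℝ :=
  probOf (fkWeight ends α p q) A

/-- Inhomogeneous Bernoulli weight. -/
def berWeight [Fintype E] (pe : E → ℝ) (ω : E → Bool) : ℝ :=
  ∏ e, if ω e = true then pe e else 1 - pe e

/-- Inhomogeneous Bernoulli product measure `P_{(p_e)}`. -/
def berProb [Fintype E] (pe : E → ℝ) (A : Set (E → Bool)) : ℝ :=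
  probOf (berWeight pe) A

/-- Increasing sets of configurations. -/
def Increasing (A : Set (E → Bool)) : Prop :=
  ∀ ⦃ω ω' : E → Bool⦄, ω ∈ A → (∀ e, ω e ≤ ω' e) → ω' ∈ A

/-- Stochastic domination `μ ≼ ν`. -/
def StochDom [Fintype E] (μ ν : Set (E → Bool) → ℝ) : Prop :=
  ∀ A : Set (E → Bool), Increasing A → μ A ≤ ν A

/-- `Q_F(e)`: cutsets for `e` included in `F`. -/
def Cutsets (ends : E → Sym2 V) (α : Setoid V) (F : Set E) (e : E) : Set (Set E) :=
  {χ | χ ⊆ F ∧ ¬ EndsConn ends α {e' | e' ∉ χ ∧ e' ≠ e} e}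


section domination

variable {E : Type*} [Fintype E]

/-- Resampling operator at `e`. -/
def resample (s : E → ℝ) (e : E) (f : (E → Bool) → ℝ) : (E → Bool) → ℝ := fun ω =>
  s e * f (Function.update ω e true) + (1 - s e) * f (Function.update ω e false)

def cc (w : (E → Bool) → ℝ) (t : ℝ) (e : E) (ω : E → Bool) : ℝ :=
  (1 - t) * w (Function.update ω e true) - t * w (Function.update ω e false)

lemma sum_flip (e : E) (g : (E → Bool) → ℝ) :
    ∑ ω, g (Function.update ω e (!(ω e))) = ∑ ω, g ω := by
  have hinv : Function.Involutive (fun ω : E → Bool => Function.update ω e (!(ω e))) := by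
    intro ω
    simp
  exact Equiv.sum_comp hinv.toPerm g

lemma sum_resample (w : (E → Bool) → ℝ) (s : E → ℝ) (e : E) (f : (E → Bool) → ℝ) :
    2 * (∑ ω, w ω * f ω - ∑ ω, w ω * resample s e f ω) =
      ∑ ω, cc w (s e) e ω * (f (Function.update ω e true) - f (Function.update ω e false)) := by
  rw [← Finset.sum_sub_distrib, two_mul]
  nth_rewrite 2 [← sum_flip e]
  rw [← Finset.sum_add_distrib]
  refine Finset.sum_congr rfl fun ω _ => ?_
  have h : ω = Function.update ω e (ω e) := by simp
  cases hb : ω e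
  · rw [hb] at h
    simp only [resample, cc, Bool.not_false, Function.update_idem]
    rw [← h]; ring
  · rw [hb] at h
    simp only [resample, cc, Bool.not_true, Function.update_idem]
    rw [← h]; ring

lemma upd_le {ω : E → Bool} (e : E) :
    Function.update ω e false ≤ Function.update ω e true := by
  intro x
  by_cases h : x = e
  · subst h; simp
  · simp [h]

lemma resample_mono {s : E → ℝ} (hs : ∀ e, s e ∈ Set.Icc (0:ℝ) 1) (e : E)
    {f : (E → Bool) → ℝ} (hf : Monotone f) : Monotone (resample s e f) := by
  intro ω ω' h
  have h2 : ∀ b, Function.update ω e b ≤ Function.update ω' e b := fun b =>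
    update_le_update_iff.2 ⟨le_rfl, fun j _ => h j⟩
  have := (hs e).1
  have := (hs e).2
  exact add_le_add (mul_le_mul_of_nonneg_left (hf (h2 _)) (by linarith))
    (mul_le_mul_of_nonneg_left (hf (h2 _)) (by linarith))

lemma le_of_cc {w : (E → Bool) → ℝ} {s : E → ℝ} {e : E} {f : (E → Bool) → ℝ} (hf : Monotone f)
    (h : ∀ ω, 0 ≤ cc w (s e) e ω) :
    ∑ ω, w ω * resample s e f ω ≤ ∑ ω, w ω * f ω := by
  have h1 := sum_resample w s e f
  have : 0 ≤ ∑ ω, cc w (s e) e ω *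
      (f (Function.update ω e true) - f (Function.update ω e false)) :=
    Finset.sum_nonneg fun ω _ => mul_nonneg (h ω) (sub_nonneg.2 (hf (upd_le e)))
  linarith

lemma le_of_sum_cc {w : (E → Bool) → ℝ} {s : E → ℝ} {e : E} {f : (E → Bool) → ℝ} (hf : Monotone f)
    (hdep : ∀ ω ω' : E → Bool, ω e = ω' e → f ω = f ω')
    (h : 0 ≤ ∑ ω, cc w (s e) e ω) :
    ∑ ω, w ω * resample s e f ω ≤ ∑ ω, w ω * f ω := by
  have h1 := sum_resample w s e f
  have : ∑ ω, cc w (s e) e ω *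
      (f (Function.update ω e true) - f (Function.update ω e false)) =
      (∑ ω, cc w (s e) e ω) * (f (fun _ => true) - f (fun _ => false)) := by
    rw [Finset.sum_mul]
    refine Finset.sum_congr rfl fun ω _ => ?_
    rw [hdep (Function.update ω e true) (fun _ => true) (by simp),
      hdep (Function.update ω e false) (fun _ => false) (by simp)]
  have h3 : f (fun _ => false) ≤ f (fun _ => true) := hf (fun _ => by simp)
  have := mul_nonneg h (sub_nonneg.2 h3)
  linarith

lemma key (s : E → ℝ) (hs : ∀ e, s e ∈ Set.Icc (0:ℝ) 1) (e₀ : E)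
    (f : (E → Bool) → ℝ) (hf : Monotone f) :
    ∃ C : ℝ, ∀ w : (E → Bool) → ℝ, (∀ e, e ≠ e₀ → ∀ ω, 0 ≤ cc w (s e) e ω) →
      0 ≤ ∑ ω, cc w (s e₀) e₀ ω → C * ∑ ω, w ω ≤ ∑ ω, w ω * f ω := by
  -- resample a finite set of edges not containing `e₀`
  have step : ∀ A : Finset E, e₀ ∉ A → ∃ g : (E → Bool) → ℝ, Monotone g ∧
      (∀ ω ω' : E → Bool, (∀ x, x ∉ A → ω x = ω' x) → g ω = g ω') ∧
      ∀ w : (E → Bool) → ℝ, (∀ e, e ≠ e₀ → ∀ ω, 0 ≤ cc w (s e) e ω) →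
        ∑ ω, w ω * g ω ≤ ∑ ω, w ω * f ω := by
    intro A
    induction A using Finset.induction_on with
    | empty =>
      intro _
      refine ⟨f, hf, fun ω ω' h => ?_, fun _ _ => le_rfl⟩
      rw [funext fun x => h x (by simp)]
    | insert a A ha ih =>
      intro h0
      rw [Finset.mem_insert, not_or] at h0
      obtain ⟨g, hg, hd, hw⟩ := ih h0.2
      refine ⟨resample s a g, resample_mono hs a hg, fun ω ω' h => ?_, fun w hc => ?_⟩
      · have : ∀ b, g (Function.update ω a b) = g (Function.update ω' a b) := by
          intro b
          apply hd
          intro x hx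
          by_cases hxa : x = a
          · subst hxa; simp
          · simp only [Function.update_of_ne hxa]
            exact h x (by simp [hxa, hx])
        simp only [resample, this]
      · exact (le_of_cc hg (hc a (Ne.symm h0.1))).trans (hw w hc)
  obtain ⟨g, hg, hd, hw⟩ := step (Finset.univ.erase e₀) (by simp)
  have hd' : ∀ ω ω' : E → Bool, ω e₀ = ω' e₀ → g ω = g ω' := by
    intro ω ω' h
    apply hd
    intro x hx
    have : x = e₀ := by simpa using hx
    rw [this, h]
  refine ⟨s e₀ * g (fun _ => true) + (1 - s e₀) * g (fun _ => false), fun w hc h0 => ?_⟩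
  refine le_trans (le_of_eq ?_) ((le_of_sum_cc hg hd' h0).trans (hw w hc))
  rw [Finset.mul_sum]
  refine Finset.sum_congr rfl fun ω _ => ?_
  rw [mul_comm, resample, hd' (Function.update ω e₀ true) (fun _ => true) (by simp),
    hd' (Function.update ω e₀ false) (fun _ => false) (by simp)]

lemma cc_neg (w : (E → Bool) → ℝ) (t : ℝ) (e : E) (ω : E → Bool) :
    cc (fun ω => - w ω) t e ω = - cc w t e ω := by
  simp only [cc]; ring

lemma key' (s : E → ℝ) (hs : ∀ e, s e ∈ Set.Icc (0:ℝ) 1) (e₀ : E)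
    (f : (E → Bool) → ℝ) (hf : Monotone f) :
    ∃ C : ℝ, ∀ w : (E → Bool) → ℝ, 
      ((∀ e, e ≠ e₀ → ∀ ω, 0 ≤ cc w (s e) e ω) →
      0 ≤ ∑ ω, cc w (s e₀) e₀ ω → C * ∑ ω, w ω ≤ ∑ ω, w ω * f ω) ∧
      ((∀ e, e ≠ e₀ → ∀ ω, cc w (s e) e ω ≤ 0) →
      ∑ ω, cc w (s e₀) e₀ ω ≤ 0 → ∑ ω, w ω * f ω ≤ C * ∑ ω, w ω) := by
  obtain ⟨C, hC⟩ := key s hs e₀ f hf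
  refine ⟨C, fun w => ⟨hC w, fun h1 h2 => ?_⟩⟩
  have := hC (fun ω => - w ω) (fun e he ω => by rw [cc_neg]; linarith [h1 e he ω])
    (by simp only [cc_neg, Finset.sum_neg_distrib]; linarith)
  simp only [neg_mul, Finset.sum_neg_distrib, mul_neg] at this
  linarith

lemma cc_ber (s : E → ℝ) (e : E) (ω : E → Bool) : cc (berWeight s) (s e) e ω = 0 := by
  have h : ∀ b : Bool, berWeight s (Function.update ω e b) =
      (if b = true then s e else 1 - s e) *
        ∏ x ∈ Finset.univ.erase e, (if ω x = true then s x else 1 - s x) := by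
    intro b
    rw [berWeight, ← Finset.mul_prod_erase _ _ (Finset.mem_univ e)]
    congr 1
    · simp
    · refine Finset.prod_congr rfl fun x hx => ?_
      rw [Function.update_of_ne (Finset.ne_of_mem_erase hx)]
  rw [cc, h, h]
  simp; ring

lemma berWeight_pos (s : E → ℝ) (hs : ∀ e, s e ∈ Set.Ioo (0:ℝ) 1) (ω : E → Bool) :
    0 < berWeight s ω := by
  refine Finset.prod_pos fun e _ => ?_
  have := (hs e).1
  have := (hs e).2
  split_ifs <;> linarith

lemma massOf_eq (w : (E → Bool) → ℝ) (A : Set (E → Bool)) :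
    massOf w A = ∑ ω, w ω * A.indicator (fun _ => (1:ℝ)) ω := by
  rw [massOf, Finset.sum_filter]
  refine Finset.sum_congr rfl fun ω _ => ?_
  by_cases h : ω ∈ A <;> simp [h]

lemma massOf_univ (w : (E → Bool) → ℝ) : massOf w Set.univ = ∑ ω, w ω := by
  simp [massOf]

lemma ind_mono {A : Set (E → Bool)} (hA : Increasing A) :
    Monotone (A.indicator (fun _ => (1:ℝ))) := by
  intro ω ω' h
  by_cases h1 : ω ∈ A
  · simp [h1, hA h1 h]
  · rw [Set.indicator_of_notMem h1]
    exact Set.indicator_nonneg (fun _ _ => zero_le_one) _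

lemma dom (w : (E → Bool) → ℝ) (hw : ∀ ω, 0 < w ω) (s : E → ℝ)
    (hs : ∀ e, s e ∈ Set.Ioo (0:ℝ) 1) (e₀ : E) :
    ((∀ e, e ≠ e₀ → ∀ ω, 0 ≤ cc w (s e) e ω) → 0 ≤ ∑ ω, cc w (s e₀) e₀ ω →
      StochDom (berProb s) (probOf w)) ∧
    ((∀ e, e ≠ e₀ → ∀ ω, cc w (s e) e ω ≤ 0) → ∑ ω, cc w (s e₀) e₀ ω ≤ 0 →
      StochDom (probOf w) (berProb s)) := by
  have hZ : 0 < ∑ ω, w ω := Finset.sum_pos (fun ω _ => hw ω) Finset.univ_nonempty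
  have hB : 0 < ∑ ω, berWeight s ω :=
    Finset.sum_pos (fun ω _ => berWeight_pos s hs ω) Finset.univ_nonempty
  have hs' : ∀ e, s e ∈ Set.Icc (0:ℝ) 1 := fun e => Set.Ioo_subset_Icc_self (hs e)
  constructor
  · intro h1 h2 A hA
    obtain ⟨C, hC⟩ := key' s hs' e₀ _ (ind_mono hA)
    rw [berProb, probOf, probOf, massOf_univ, massOf_univ, massOf_eq, massOf_eq]
    have a := (hC w).1 h1 h2
    have b := (hC (berWeight s)).2 (fun e _ ω => (cc_ber s e ω).le) (by simp [cc_ber])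
    exact ((div_le_iff₀ hB).2 b).trans ((le_div_iff₀ hZ).2 a)
  · intro h1 h2 A hA
    obtain ⟨C, hC⟩ := key' s hs' e₀ _ (ind_mono hA)
    rw [berProb, probOf, probOf, massOf_univ, massOf_univ, massOf_eq, massOf_eq]
    have a := (hC w).2 h1 h2
    have b := (hC (berWeight s)).1 (fun e _ ω => (cc_ber s e ω).ge) (by simp [cc_ber])
    exact ((div_le_iff₀ hZ).2 a).trans ((le_div_iff₀ hB).2 b)

lemma exists_lower (w : (E → Bool) → ℝ) (hw : ∀ ω, 0 < w ω) (t : ℝ) (ht : t ∈ Set.Ioo (0:ℝ) 1)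
    (h : ∀ e ω, 0 ≤ cc w t e ω) (hs : ∃ e ω, 0 < cc w t e ω) :
    ∃ ε : E → ℝ, (∀ e, ε e ∈ Set.Icc (0:ℝ) 1) ∧ (∃ e, ε e ≠ 0) ∧
      StochDom (berProb fun e => t + ε e) (probOf w) := by
  obtain ⟨e₀, ω₀, h0⟩ := hs
  have hpos : 0 < ∑ ω, cc w t e₀ ω :=
    Finset.sum_pos' (fun ω _ => h e₀ ω) ⟨ω₀, Finset.mem_univ _, h0⟩
  set a := ∑ ω, w (Function.update ω e₀ true) with ha
  set b := ∑ ω, w (Function.update ω e₀ false) with hb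
  have hap : 0 < a := Finset.sum_pos (fun ω _ => hw _) Finset.univ_nonempty
  have hbp : 0 < b := Finset.sum_pos (fun ω _ => hw _) Finset.univ_nonempty
  have hc : ∀ r, ∑ ω, cc w r e₀ ω = (1 - r) * a - r * b := by
    intro r
    simp only [cc, Finset.sum_sub_distrib, ← Finset.mul_sum, ha, hb]
  rw [hc] at hpos
  have h1 : t < a / (a + b) := by rw [lt_div_iff₀ (by linarith)]; linarith
  have h2 : a / (a + b) < 1 := by rw [div_lt_one (by linarith)]; linarith
  have ht0 := ht.1
  have ht1 := ht.2
  refine ⟨fun e => if e = e₀ then a / (a + b) - t else 0, fun e => ?_, ⟨e₀, ?_⟩, ?_⟩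
  · dsimp only
    split_ifs
    · constructor <;> linarith
    · simp
  · simp only [if_true]; linarith
  · refine (dom w hw _ (fun e => ?_) e₀).1 (fun e he ω => ?_) ?_
    · dsimp only
      split_ifs
      · constructor <;> linarith
      · simpa using ht
    · simpa [he] using h e ω
    · simp only [if_true, hc]
      apply le_of_eq
      field_simp
      ring

lemma exists_upper (w : (E → Bool) → ℝ) (hw : ∀ ω, 0 < w ω) (t : ℝ) (ht : t ∈ Set.Ioo (0:ℝ) 1)
    (h : ∀ e ω, cc w t e ω ≤ 0) (hs : ∃ e ω, cc w t e ω < 0) :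
    ∃ ε : E → ℝ, (∀ e, ε e ∈ Set.Icc (0:ℝ) 1) ∧ (∃ e, ε e ≠ 0) ∧
      StochDom (probOf w) (berProb fun e => t - ε e) := by
  obtain ⟨e₀, ω₀, h0⟩ := hs
  have hpos : ∑ ω, cc w t e₀ ω < 0 :=
    Finset.sum_neg' (fun ω _ => h e₀ ω) ⟨ω₀, Finset.mem_univ _, h0⟩
  set a := ∑ ω, w (Function.update ω e₀ true) with ha
  set b := ∑ ω, w (Function.update ω e₀ false) with hb
  have hap : 0 < a := Finset.sum_pos (fun ω _ => hw _) Finset.univ_nonempty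
  have hbp : 0 < b := Finset.sum_pos (fun ω _ => hw _) Finset.univ_nonempty
  have hc : ∀ r, ∑ ω, cc w r e₀ ω = (1 - r) * a - r * b := by
    intro r
    simp only [cc, Finset.sum_sub_distrib, ← Finset.mul_sum, ha, hb]
  rw [hc] at hpos
  have h1 : a / (a + b) < t := by rw [div_lt_iff₀ (by linarith)]; linarith
  have h2 : 0 < a / (a + b) := by positivity
  have ht0 := ht.1
  have ht1 := ht.2
  refine ⟨fun e => if e = e₀ then t - a / (a + b) else 0, fun e => ?_, ⟨e₀, ?_⟩, ?_⟩
  · dsimp only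
    split_ifs
    · constructor <;> linarith
    · simp
  · simp only [if_true]; linarith
  · refine (dom w hw _ (fun e => ?_) e₀).2 (fun e he ω => ?_) ?_
    · dsimp only
      split_ifs
      · constructor <;> linarith
      · simpa using ht
    · simpa [he] using h e ω
    · simp only [if_true, hc]
      apply le_of_eq
      field_simp
      ring

end domination

section components

variable {V E : Type*}

lemma connSetoid_le {ends : E → Sym2 V} {α : Setoid V} {F : Set E} {S : Setoid (Quotient α)}
    (h : ∀ x y, Step ends α F x y → S x y) : connSetoid ends α F ≤ S :=
  Setoid.eqvGen_le h

lemma conn_of_step {ends : E → Sym2 V} {α : Setoid V} {F : Set E} {x y : Quotient α}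
    (h : Step ends α F x y) : connSetoid ends α F x y := Relation.EqvGen.rel _ _ h

/-- Merge two classes of a setoid. -/
def mergeSetoid {X : Type*} (S : Setoid X) (x y : X) : Setoid X where
  r a b := S a b ∨ ((S a x ∨ S a y) ∧ (S b x ∨ S b y))
  iseqv := by
    refine ⟨fun a => Or.inl (S.refl a), ?_, ?_⟩
    · rintro a b (h | ⟨h1, h2⟩)
      · exact Or.inl (S.symm h)
      · exact Or.inr ⟨h2, h1⟩
    · rintro a b c (h | ⟨h1, h2⟩) (h' | ⟨h1', h2'⟩)
      · exact Or.inl (S.trans h h')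
      · exact Or.inr ⟨h1'.imp (S.trans h) (S.trans h), h2'⟩
      · exact Or.inr ⟨h1, h2.imp (S.trans (S.symm h')) (S.trans (S.symm h'))⟩
      · exact Or.inr ⟨h1, h2'⟩

lemma card_merge {X : Type*} [Finite X] (S S' : Setoid X) (x y : X) (hxy : ¬ S x y)
    (hSS : S ≤ S') (hx : S' x y) (hm : S' ≤ mergeSetoid S x y) :
    Nat.card (Quotient S) = Nat.card (Quotient S') + 1 := by
  have e : {c : Quotient S // c ≠ Quotient.mk S y} ≃ Quotient S' := by
    refine Equiv.ofBijective (fun c => Quotient.map' (s₁ := S) (s₂ := S') id (fun a b h => hSS h) c.1) ⟨?_, ?_⟩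
    · rintro ⟨a, ha⟩ ⟨b, hb⟩ h
      induction a using Quotient.inductionOn with | _ a
      induction b using Quotient.inductionOn with | _ b
      have h' : S' a b := Quotient.exact h
      have ha' : ¬ S a y := fun h => ha (Quotient.sound h)
      have hb' : ¬ S b y := fun h => hb (Quotient.sound h)
      apply Subtype.ext
      apply Quotient.sound
      rcases hm h' with h | ⟨h1, h2⟩
      · exact h
      · exact S.trans (h1.resolve_right ha') (S.symm (h2.resolve_right hb'))
    · intro c
      induction c using Quotient.inductionOn with | _ a
      by_cases h : S a y
      · refine ⟨⟨Quotient.mk S x, fun h' => hxy (Quotient.exact h')⟩, ?_⟩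
        exact Quotient.sound (S'.trans hx (S'.symm (hSS h)))
      · exact ⟨⟨Quotient.mk S a, fun h' => h (Quotient.exact h')⟩, rfl⟩
  rw [← Nat.card_congr e, ← Nat.card_congr (Equiv.optionSubtypeNe (Quotient.mk S y)),
    Finite.card_option]

lemma numComponents_conn (ends : E → Sym2 V) (α : Setoid V) (e : E) (ω : E → Bool)
    (h : EndsConn ends α {x | Function.update ω e false x = true} e) :
    numComponents ends α (Function.update ω e true) =
      numComponents ends α (Function.update ω e false) := by
  have : connSetoid ends α {x | Function.update ω e true x = true} =
      connSetoid ends α {x | Function.update ω e false x = true} := by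
    apply le_antisymm
    · apply connSetoid_le
      rintro x y ⟨e', he', hm⟩
      by_cases hee : e' = e
      · subst hee
        induction hE : ends e' using Sym2.inductionOn with | _ u v
        have h1 := h u v hE
        rw [hE, Sym2.map_mk, Sym2.eq_iff] at hm
        rcases hm with ⟨rfl, rfl⟩ | ⟨rfl, rfl⟩
        · exact h1
        · exact Setoid.symm' _ h1
      · refine conn_of_step ⟨e', ?_, hm⟩
        simpa [hee] using he'
    · apply connSetoid_le
      rintro x y ⟨e', he', hm⟩
      refine conn_of_step ⟨e', ?_, hm⟩
      by_cases hee : e' = e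
      · subst hee; simp
      · simpa [hee] using he'
  rw [numComponents, numComponents, this]

lemma numComponents_not_conn [Finite V] (ends : E → Sym2 V) (α : Setoid V) (e : E) (ω : E → Bool)
    (h : ¬ EndsConn ends α {x | Function.update ω e false x = true} e) :
    numComponents ends α (Function.update ω e false) =
      numComponents ends α (Function.update ω e true) + 1 := by
  simp only [EndsConn, not_forall] at h
  obtain ⟨x, y, hE, hxy⟩ := h
  refine card_merge _ _ (Quotient.mk α x) (Quotient.mk α y) hxy ?_ ?_ ?_
  · apply connSetoid_le
    rintro x y ⟨e', he', hm⟩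
    refine conn_of_step ⟨e', ?_, hm⟩
    by_cases hee : e' = e
    · subst hee; simp
    · simpa [hee] using he'
  · exact conn_of_step ⟨e, by simp, by rw [hE, Sym2.map_mk]⟩
  · apply connSetoid_le
    rintro u v ⟨e', he', hm⟩
    by_cases hee : e' = e
    · subst hee
      rw [hE, Sym2.map_mk, Sym2.eq_iff] at hm
      rcases hm with ⟨rfl, rfl⟩ | ⟨rfl, rfl⟩
      · exact Or.inr ⟨Or.inl (Setoid.refl' _ _), Or.inr (Setoid.refl' _ _)⟩
      · exact Or.inr ⟨Or.inr (Setoid.refl' _ _), Or.inl (Setoid.refl' _ _)⟩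
    · refine Or.inl (conn_of_step ⟨e', ?_, hm⟩)
      simpa [hee] using he'

lemma fkWeight_upd [Fintype E] (ends : E → Sym2 V) (α : Setoid V) (p q : ℝ) (e : E)
    (ω : E → Bool) (b : Bool) : fkWeight ends α p q (Function.update ω e b) =
      (if b = true then p else 1 - p) *
        (∏ x ∈ Finset.univ.erase e, (if ω x = true then p else 1 - p)) *
        q ^ numComponents ends α (Function.update ω e b) := by
  have h0 : ∀ ω : E → Bool, p ^ (Finset.univ.filter fun e => ω e = true).card *
    (1 - p) ^ (Finset.univ.filter fun e => ω e = false).card =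
      ∏ x, (if ω x = true then p else 1 - p) := by
    intro ω
    rw [Finset.prod_ite, Finset.prod_const, Finset.prod_const]
    simp
  rw [fkWeight, h0, ← Finset.mul_prod_erase _ _ (Finset.mem_univ e)]
  congr 2
  · simp
  · refine Finset.prod_congr rfl fun x hx => ?_
    rw [Function.update_of_ne (Finset.ne_of_mem_erase hx)]

lemma fkWeight_pos [Fintype E] (ends : E → Sym2 V) (α : Setoid V) {p q : ℝ}
    (hp : p ∈ Set.Ioo (0 : ℝ) 1) (hq : 0 < q) (ω : E → Bool) : 0 < fkWeight ends α p q ω := by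
  have := hp.1
  have : 0 < 1 - p := by linarith [hp.2]
  unfold fkWeight
  positivity

lemma cc_fk [Finite V] [Fintype E] (ends : E → Sym2 V) (α : Setoid V) {p q : ℝ}
    (hp : p ∈ Set.Ioo (0 : ℝ) 1) (hq : 0 < q) (e : E) (ω : E → Bool) :
    ∃ K > 0, ∀ t, cc (fkWeight ends α p q) t e ω =
      K * ((if EndsConn ends α {x | Function.update ω e false x = true} e then p
        else pPrime p q) - t) := by
  have hp0 := hp.1
  have hp1 : 0 < 1 - p := by linarith [hp.2]
  have hP : 0 < ∏ x ∈ Finset.univ.erase e, (if ω x = true then p else 1 - p) :=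
    Finset.prod_pos fun x _ => by split_ifs <;> assumption
  have hD : 0 < p + q * (1 - p) := by positivity
  by_cases h : EndsConn ends α {x | Function.update ω e false x = true} e
  · refine ⟨(∏ x ∈ Finset.univ.erase e, (if ω x = true then p else 1 - p)) *
      q ^ numComponents ends α (Function.update ω e false), by positivity, fun t => ?_⟩
    rw [cc, fkWeight_upd, fkWeight_upd, numComponents_conn ends α e ω h, if_pos h]
    simp only [if_true, Bool.false_eq_true, if_false]
    ring
  · refine ⟨(∏ x ∈ Finset.univ.erase e, (if ω x = true then p else 1 - p)) *
      q ^ numComponents ends α (Function.update ω e true) * (p + q * (1 - p)),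
      by positivity, fun t => ?_⟩
    rw [cc, fkWeight_upd, fkWeight_upd, numComponents_not_conn ends α e ω h, if_neg h, pPrime]
    simp only [if_true, Bool.false_eq_true, if_false]
    field_simp
    ring

end components

/-- **Theorem 1.1 (Enhanced comparison inequalities).** -/
theorem enhanced_comparison_inequalities
    {V E : Type*} [Fintype V] [Fintype E]
    (ends : E → Sym2 V) (α : Setoid V)
    (hconn : ∀ x y : Quotient α, Conn ends α Set.univ x y)
    (hnontriv : Nontrivial (Quotient α))
    (hcycle : ∃ e : E, EndsConn ends α {e' | e' ≠ e} e)
    (p q : ℝ) (hp : p ∈ Set.Ioo (0 : ℝ) 1) (hq : 0 < q) (hq1 : q ≠ 1) :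
    ∃ ε ε' : E → ℝ,
      (∀ e, ε e ∈ Set.Icc (0 : ℝ) 1) ∧ (∀ e, ε' e ∈ Set.Icc (0 : ℝ) 1) ∧
      (∃ e, ε e ≠ 0) ∧ (∃ e, ε' e ≠ 0) ∧
      StochDom (berProb fun e => min p (pPrime p q) + ε e) (fkProb ends α p q) ∧
      StochDom (fkProb ends α p q) (berProb fun e => max p (pPrime p q) - ε' e) := by
  have hp0 := hp.1
  have hp1 : 0 < 1 - p := by linarith [hp.2]
  have hD : 0 < p + q * (1 - p) := by positivity
  have hpp : pPrime p q ∈ Set.Ioo (0:ℝ) 1 := by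
    constructor
    · unfold pPrime; positivity
    · unfold pPrime; rw [div_lt_one hD]
      have : 0 < q * (1 - p) := by positivity
      linarith
  have hne : pPrime p q ≠ p := by
    intro h
    rw [pPrime, div_eq_iff hD.ne'] at h
    have h2 : p * (1 - p) * (q - 1) = 0 := by linarith
    rcases mul_eq_zero.1 h2 with h3 | h3
    · exact absurd h3 (by positivity)
    · exact hq1 (by linarith)
  have hw := fkWeight_pos ends α hp hq
  -- an instance where the ends are connected
  obtain ⟨e₁, he₁⟩ := hcycle
  have hc1 : ∃ e ω, EndsConn ends α {x | Function.update ω e false x = true} e := by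
    refine ⟨e₁, fun _ => true, ?_⟩
    convert he₁ using 1
    ext x
    by_cases hx : x = e₁
    · subst hx; simp
    · simp [hx]
  -- an instance where the ends are not connected
  have hc2 : ∃ e ω, ¬ EndsConn ends α {x | Function.update ω e false x = true} e := by
    by_contra! hall
    obtain ⟨a, b, hab⟩ := exists_pair_ne (Quotient α)
    have hbot : ∀ e : E, ∀ x y, Conn ends α
        {z | Function.update (fun _ => false) e false z = true} x y → x = y := by
      intro e x y hxy
      have : connSetoid ends α {z | Function.update (fun _ : E => false) e false z = true} ≤ ⊥ := by
        apply connSetoid_le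
        rintro u v ⟨z, hz, _⟩
        simp at hz
      exact this hxy
    have : connSetoid ends α Set.univ ≤ ⊥ := by
      apply connSetoid_le
      rintro u v ⟨e, _, hm⟩
      induction hE : ends e using Sym2.inductionOn with | _ x y
      have h1 := hbot e _ _ (hall e (fun _ => false) x y hE)
      rw [hE, Sym2.map_mk, h1, Sym2.eq_iff] at hm
      rcases hm with ⟨rfl, rfl⟩ | ⟨rfl, rfl⟩ <;> exact Setoid.refl' _ _
    exact hab (this (hconn a b))
  obtain ⟨e₂, ω₂, h₂⟩ := hc1
  obtain ⟨e₃, ω₃, h₃⟩ := hc2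
  obtain ⟨K₂, hK₂, hk₂⟩ := cc_fk ends α hp hq e₂ ω₂
  obtain ⟨K₃, hK₃, hk₃⟩ := cc_fk ends α hp hq e₃ ω₃
  rw [if_pos h₂] at hk₂
  rw [if_neg h₃] at hk₃
  obtain ⟨ε, a1, a2, a3⟩ := exists_lower (fkWeight ends α p q) hw (min p (pPrime p q))
    ⟨lt_min hp.1 hpp.1, min_lt_of_left_lt hp.2⟩
    (fun e ω => by
      obtain ⟨K, hK, hk⟩ := cc_fk ends α hp hq e ω
      rw [hk]
      refine mul_nonneg hK.le (sub_nonneg.2 ?_)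
      split_ifs
      · exact min_le_left _ _
      · exact min_le_right _ _)
    (by
      rcases lt_or_gt_of_ne hne with h | h
      · refine ⟨e₂, ω₂, ?_⟩
        rw [hk₂, min_eq_right h.le]
        exact mul_pos hK₂ (sub_pos.2 h)
      · refine ⟨e₃, ω₃, ?_⟩
        rw [hk₃, min_eq_left h.le]
        exact mul_pos hK₃ (sub_pos.2 h))
  obtain ⟨ε', b1, b2, b3⟩ := exists_upper (fkWeight ends α p q) hw (max p (pPrime p q))
    ⟨lt_max_of_lt_left hp.1, max_lt hp.2 hpp.2⟩
    (fun e ω => by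
      obtain ⟨K, hK, hk⟩ := cc_fk ends α hp hq e ω
      rw [hk]
      refine mul_nonpos_of_nonneg_of_nonpos hK.le (sub_nonpos.2 ?_)
      split_ifs
      · exact le_max_left _ _
      · exact le_max_right _ _)
    (by
      rcases lt_or_gt_of_ne hne with h | h
      · refine ⟨e₃, ω₃, ?_⟩
        rw [hk₃, max_eq_left h.le]
        exact mul_neg_of_pos_of_neg hK₃ (sub_neg.2 h)
      · refine ⟨e₂, ω₂, ?_⟩
        rw [hk₂, max_eq_right h.le]
        exact mul_neg_of_pos_of_neg hK₂ (sub_neg.2 h))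
  exact ⟨ε, ε', a1, b1, a2, b2, a3, b3⟩
end FKPaper
end
end

section
/- Lower enhancement via cutsets, case p < p' (Proposition 3.1, item 1). Let (V, E, ends, α) be a finite graph with boundary condition, p ∈ (0,1), q > 0, and suppose p < p'. Let Ê ⊆ E be such that for every e ∈ Ê, e ∉ E∖Ê trivially holds and Q_{E∖Ê}(e) is nonempty (every e ∈ Ê admits a cutset included in E∖Ê). For e ∈ Ê set ε̂_e := (p'−p) · P_{max(p,p')}({ω : ∃ χ ∈ Q_{E∖Ê}(e) with ω e' = false for every e' ∈ χ}), and set ε̂_e := 0 for e ∉ Ê. Then P_{(p+ε̂_e)_{e∈E}} ≼ φ^α_{G,p,q}. -/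
open scoped Classical

noncomputable section

namespace FKPaper

variable {V E : Type*}

section Aux

variable {V E : Type*}

/-- `f` depends only on the coordinates in `S`. -/
def Dep (f : (E → Bool) → ℝ) (S : Set E) : Prop :=
  ∀ ω ω' : E → Bool, (∀ e ∈ S, ω e = ω' e) → f ω = f ω'

/-- monotone functions of configurations -/
def Inc (f : (E → Bool) → ℝ) : Prop :=
  ∀ ω ω' : E → Bool, (∀ e, ω e ≤ ω' e) → f ω ≤ f ω'

/-- force the state of an edge -/
def upd (ω : E → Bool) (e : E) (b : Bool) : E → Bool := fun e' => if e' = e then b else ω e'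

lemma upd_self (ω : E → Bool) (e : E) (b : Bool) : upd ω e b e = b := by simp [upd]

lemma upd_ne (ω : E → Bool) {e e' : E} (b : Bool) (h : e' ≠ e) : upd ω e b e' = ω e' := by
  simp [upd, h]

lemma upd_upd (ω : E → Bool) (e : E) (b c : Bool) : upd (upd ω e b) e c = upd ω e c := by
  funext x; by_cases h : x = e <;> simp [upd, h]

lemma upd_eq (ω : E → Bool) (e : E) : upd ω e (ω e) = ω := by
  funext x; by_cases h : x = e <;> simp [upd, h]

/-- averaging over an edge -/
def avg (s : ℝ) (e : E) (f : (E → Bool) → ℝ) (ω : E → Bool) : ℝ :=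
  s * f (upd ω e true) + (1 - s) * f (upd ω e false)

lemma sum_pair [Fintype E] (e : E) (F : (E → Bool) → ℝ) :
    ∑ ω, (F (upd ω e true) + F (upd ω e false)) = 2 * ∑ ω, F ω := by
  have h1 : ∀ ω : E → Bool, F (upd ω e true) + F (upd ω e false) = F ω + F (upd ω e (!ω e)) := by
    intro ω
    have h := upd_eq ω e
    cases hb : ω e
    · rw [hb] at h
      rw [h]; simp [add_comm]
    · rw [hb] at h
      rw [h]; simp
  have h2 : ∑ ω, F (upd ω e (!ω e)) = ∑ ω, F ω := by
    have inv : Function.Involutive (fun ω : E → Bool => upd ω e (!ω e)) := by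
      intro ω
      simp only [upd_self, upd_upd, Bool.not_not, upd_eq]
    exact (Equiv.sum_comp inv.toPerm F)
  rw [Finset.sum_congr rfl (fun ω _ => h1 ω), Finset.sum_add_distrib, h2, two_mul]

lemma sum_nonneg_of_pair [Fintype E] (e : E) (F : (E → Bool) → ℝ)
    (h : ∀ ω, 0 ≤ F (upd ω e true) + F (upd ω e false)) : 0 ≤ ∑ ω, F ω := by
  have := sum_pair e F
  have h2 : 0 ≤ ∑ ω, (F (upd ω e true) + F (upd ω e false)) :=
    Finset.sum_nonneg (fun ω _ => h ω)
  linarith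

lemma dep_upd {f : (E → Bool) → ℝ} {S : Set E} (hf : Dep f S) {e : E} (he : e ∉ S)
    (ω : E → Bool) (b : Bool) : f (upd ω e b) = f ω := by
  apply hf
  intro x hx
  exact upd_ne _ _ (fun h => he (h ▸ hx))

lemma Dep.mono {f : (E → Bool) → ℝ} {S T : Set E} (hf : Dep f S) (h : S ⊆ T) : Dep f T :=
  fun ω ω' hω => hf ω ω' (fun e he => hω e (h he))

/-- indicator of openness -/
def opn (ω : E → Bool) (e : E) : ℝ := if ω e = true then 1 else 0

/-- comparison from single-edge weights -/
lemma pair_le [Fintype E] (e : E) (w g c : (E → Bool) → ℝ)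
    (hg : ∀ ω b, g (upd ω e b) = g ω) (hc : ∀ ω b, c (upd ω e b) = c ω)
    (hg0 : ∀ ω, 0 ≤ g ω)
    (h : ∀ ω, c ω * w (upd ω e false) ≤ (1 - c ω) * w (upd ω e true)) :
    ∑ ω, w ω * g ω * c ω ≤ ∑ ω, w ω * g ω * opn ω e := by
  have := sum_nonneg_of_pair e (fun ω => w ω * g ω * opn ω e - w ω * g ω * c ω) (by
    intro ω
    simp only [hg, hc, opn, upd_self]
    have := mul_le_mul_of_nonneg_left (h ω) (hg0 ω)
    simp
    nlinarith)
  rw [Finset.sum_sub_distrib] at this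
  linarith

lemma ber_split [Fintype E] (pe : E → ℝ) (e : E) (ω : E → Bool) (b : Bool) :
    berWeight pe (upd ω e b) = (if b = true then pe e else 1 - pe e) *
      ∏ x ∈ Finset.univ.erase e, if ω x = true then pe x else 1 - pe x := by
  unfold berWeight
  rw [← Finset.mul_prod_erase _ _ (Finset.mem_univ e), upd_self]
  congr 1
  apply Finset.prod_congr rfl
  intro x hx
  rw [upd_ne _ _ (Finset.ne_of_mem_erase hx)]

lemma ber_avg [Fintype E] (pe : E → ℝ) (e : E) (f : (E → Bool) → ℝ) :
    ∑ ω, berWeight pe ω * avg (pe e) e f ω = ∑ ω, berWeight pe ω * f ω := by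
  have h1 := sum_pair e (fun ω => berWeight pe ω * avg (pe e) e f ω)
  have h2 := sum_pair e (fun ω => berWeight pe ω * f ω)
  have : ∀ ω : E → Bool, (berWeight pe (upd ω e true) * avg (pe e) e f (upd ω e true)
      + berWeight pe (upd ω e false) * avg (pe e) e f (upd ω e false))
      = berWeight pe (upd ω e true) * f (upd ω e true)
      + berWeight pe (upd ω e false) * f (upd ω e false) := by
    intro ω
    simp only [ber_split, avg, upd_upd]
    simp
    ring
  simp only [this] at h1
  linarith

lemma ber_sum [Fintype E] (pe : E → ℝ) : ∑ ω : E → Bool, berWeight pe ω = 1 := by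
  unfold berWeight
  have := Finset.prod_univ_sum (fun _ : E => (Finset.univ : Finset Bool))
    (fun e b => if b = true then pe e else 1 - pe e)
  rw [Fintype.piFinset_univ] at this
  rw [← this]
  simp

lemma ber_nonneg [Fintype E] (pe : E → ℝ) (h : ∀ e, 0 ≤ pe e ∧ pe e ≤ 1) (ω : E → Bool) :
    0 ≤ berWeight pe ω := by
  unfold berWeight
  apply Finset.prod_nonneg
  intro e _
  split_ifs
  · exact (h e).1
  · linarith [(h e).2]

lemma massOf_eq_s1 {ι : Type*} [Fintype ι] (w : ι → ℝ) (A : Set ι) :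
    massOf w A = ∑ x, w x * (if x ∈ A then 1 else 0) := by
  unfold massOf
  rw [Finset.sum_filter]
  apply Finset.sum_congr rfl
  intro x _
  split_ifs <;> simp

lemma massOf_univ_s1 {ι : Type*} [Fintype ι] (w : ι → ℝ) :
    massOf w Set.univ = ∑ x, w x := by
  simp [massOf_eq_s1]

lemma berProb_eq [Fintype E] (pe : E → ℝ) (A : Set (E → Bool)) :
    berProb pe A = ∑ ω, berWeight pe ω * (if ω ∈ A then 1 else 0) := by
  unfold berProb probOf
  rw [massOf_univ_s1, ber_sum, div_one, massOf_eq_s1]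

lemma berProb_mem [Fintype E] (pe : E → ℝ) (h : ∀ e, 0 ≤ pe e ∧ pe e ≤ 1) (A : Set (E → Bool)) :
    0 ≤ berProb pe A ∧ berProb pe A ≤ 1 := by
  rw [berProb_eq]
  constructor
  · apply Finset.sum_nonneg
    intro ω _
    have := ber_nonneg pe h ω
    split_ifs <;> simp [this]
  · refine le_trans ?_ (ber_sum pe).le
    apply Finset.sum_le_sum
    intro ω _
    have := ber_nonneg pe h ω
    split_ifs <;> simp [this]

lemma key_s1 [Fintype E] (w : (E → Bool) → ℝ) (pe : E → ℝ) (hpe : ∀ e, 0 ≤ pe e ∧ pe e ≤ 1)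
    (R : Set E)
    (base : ∀ f, Inc f → Dep f R →
      (∑ ω, w ω) * ∑ ω, berWeight pe ω * f ω ≤ ∑ ω, w ω * f ω)
    (S : Finset E) :
    (∀ e ∈ S, e ∉ R → ∀ D, (∀ ω, 0 ≤ D ω) → Dep D ((R ∪ (S : Set E)) \ {e}) →
      pe e * ∑ ω, w ω * D ω ≤ ∑ ω, w ω * D ω * opn ω e) →
    ∀ f, Inc f → Dep f (R ∪ (S : Set E)) →
      (∑ ω, w ω) * ∑ ω, berWeight pe ω * f ω ≤ ∑ ω, w ω * f ω := by
  induction S using Finset.induction_on with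
  | empty =>
    intro _ f hf hd
    exact base f hf (by simpa using hd)
  | insert a S ha ih =>
    intro h f hf hd
    have ih' := ih (fun e he heR D hD hdep => h e (Finset.mem_insert_of_mem he) heR D hD
      (hdep.mono (by intro x hx; simp at hx ⊢; tauto)))
    by_cases haR : a ∈ R
    · exact ih' f hf (hd.mono (by
        intro x hx; simp at hx ⊢
        rcases hx with h | h | h
        · exact Or.inl (h ▸ haR)
        · exact Or.inl h
        · exact Or.inr h))
    · have hTinc : Inc (avg (pe a) a f) := by
        intro ω ω' hω
        have hb : ∀ b, f (upd ω a b) ≤ f (upd ω' a b) := by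
          intro b
          apply hf
          intro x
          by_cases hx : x = a
          · simp [upd, hx]
          · simp [upd, hx, hω x]
        unfold avg
        have h1 := mul_le_mul_of_nonneg_left (hb true) (hpe a).1
        have h2 := mul_le_mul_of_nonneg_left (hb false) (sub_nonneg.2 (hpe a).2)
        linarith
      have hupd : ∀ ω ω' : E → Bool, (∀ e ∈ (R ∪ ((insert a S : Finset E) : Set E)) \ {a}, ω e = ω' e) →
          ∀ b, f (upd ω a b) = f (upd ω' a b) := by
        intro ω ω' hω b
        apply hd
        intro x hx
        by_cases hxa : x = a
        · simp [upd, hxa]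
        · rw [upd_ne _ _ hxa, upd_ne _ _ hxa]
          exact hω x ⟨hx, hxa⟩
      have hTdep : Dep (avg (pe a) a f) (R ∪ (S : Set E)) := by
        intro ω ω' hω
        have := hupd ω ω' (fun e he => hω e (by
          simp at he ⊢; tauto))
        unfold avg
        rw [this, this]
      have h1 := ih' _ hTinc hTdep
      rw [ber_avg] at h1
      refine h1.trans ?_
      have h2 := h a (Finset.mem_insert_self a S) haR
        (fun ω => f (upd ω a true) - f (upd ω a false))
        (by
          intro ω
          apply sub_nonneg.2
          apply hf
          intro x
          by_cases hx : x = a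
          · simp [upd, hx]
          · simp [upd, hx])
        (by
          intro ω ω' hω
          have := hupd ω ω' hω
          simp only [this])
      have e1 : ∀ ω : E → Bool, w ω * f ω = w ω * f (upd ω a false) +
          w ω * (f (upd ω a true) - f (upd ω a false)) * opn ω a := by
        intro ω
        have hh := upd_eq ω a
        cases hb : ω a
        · rw [hb] at hh
          simp [opn, hb, hh]
        · rw [hb] at hh
          simp only [opn, hb, hh, if_true]
          ring
      have e2 : ∀ ω : E → Bool, w ω * avg (pe a) a f ω = w ω * f (upd ω a false) +
          pe a * (w ω * (f (upd ω a true) - f (upd ω a false))) := by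
        intro ω
        unfold avg
        ring
      rw [Finset.sum_congr rfl (fun ω _ => e1 ω), Finset.sum_congr rfl (fun ω _ => e2 ω),
        Finset.sum_add_distrib, Finset.sum_add_distrib, ← Finset.mul_sum]
      linarith

lemma base_empty [Fintype E] (w : (E → Bool) → ℝ) (pe : E → ℝ) :
    ∀ f, Inc f → Dep f (∅ : Set E) →
      (∑ ω, w ω) * ∑ ω, berWeight pe ω * f ω ≤ ∑ ω, w ω * f ω := by
  intro f _ hd
  have : ∀ ω, f ω = f (fun _ => false) := fun ω => hd _ _ (by simp)
  have h1 : ∑ ω, berWeight pe ω * f ω = f (fun _ => false) := by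
    rw [Finset.sum_congr rfl (fun ω _ => by rw [this ω]), ← Finset.sum_mul, ber_sum, one_mul]
  rw [h1, Finset.sum_mul]
  apply le_of_eq
  apply Finset.sum_congr rfl
  intro ω _
  rw [this ω]

/-! Graph part -/

lemma card_merge_s1 {X : Type*} [Finite X] (r r' : Setoid X) (a b : X)
    (hle : ∀ x y, r x y → r' x y) (hab : r' a b)
    (hr' : ∀ x y, r' x y → r x y ∨ (r x a ∧ r b y) ∨ (r x b ∧ r a y)) :
    Nat.card (Quotient r') ≤ Nat.card (Quotient r) ∧
    Nat.card (Quotient r) ≤ Nat.card (Quotient r') + 1 ∧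
    (¬ r a b → Nat.card (Quotient r') + 1 ≤ Nat.card (Quotient r)) := by
  let π : Quotient r → Quotient r' := Quotient.map' id hle
  have hπ : ∀ x, π (Quotient.mk r x) = Quotient.mk r' x := fun x => rfl
  have hs : Function.Surjective π := by
    intro y
    induction y using Quotient.inductionOn with
    | _ x => exact ⟨Quotient.mk r x, rfl⟩
  refine ⟨Nat.card_le_card_of_surjective π hs, ?_, ?_⟩
  · have : Nat.card (Option (Quotient r')) = Nat.card (Quotient r') + 1 := by
      exact Finite.card_option
    rw [← this]
    let g : Quotient r → Option (Quotient r') :=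
      fun c => if c = Quotient.mk r a then none else some (π c)
    apply Nat.card_le_card_of_injective g
    intro c d
    induction c using Quotient.inductionOn with
    | _ x =>
    induction d using Quotient.inductionOn with
    | _ y =>
    intro h
    simp only [g, hπ] at h
    split_ifs at h with h1 h2 h2
    · rw [h1, h2]
    · simp only [Option.some.injEq] at h
      have h3 : r' x y := Quotient.exact h
      apply Quotient.sound
      rcases hr' x y h3 with h | ⟨h, _⟩ | ⟨_, h⟩
      · exact h
      · exact absurd (Quotient.sound h) h1
      · exact absurd (Quotient.sound (r.symm h)) h2
  · intro hn
    by_contra hcon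
    have heq : Nat.card (Quotient r) = Nat.card (Quotient r') :=
      le_antisymm (by omega) (Nat.card_le_card_of_surjective π hs)
    have hbij := (Nat.bijective_iff_surjective_and_card π).2 ⟨hs, heq⟩
    apply hn
    apply Quotient.exact (s := r)
    apply hbij.1
    rw [hπ, hπ]
    exact Quotient.sound hab

lemma conn_mono (ends : E → Sym2 V) (α : Setoid V) {F G : Set E} (h : F ⊆ G)
    {x y : Quotient α} (hc : Conn ends α F x y) : Conn ends α G x y := by
  refine Relation.EqvGen.mono (r := Step ends α F) ?_ _ _ hc
  rintro a b ⟨e, he, hs⟩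
  exact ⟨e, h he, hs⟩

lemma numComp [Fintype V] (ends : E → Sym2 V) (α : Setoid V) (ω : E → Bool) (e : E) :
    numComponents ends α (upd ω e true) ≤ numComponents ends α (upd ω e false) ∧
    numComponents ends α (upd ω e false) ≤ numComponents ends α (upd ω e true) + 1 ∧
    (¬ EndsConn ends α {e' | upd ω e false e' = true} e →
      numComponents ends α (upd ω e true) + 1 ≤ numComponents ends α (upd ω e false)) := by
  obtain ⟨x, y, hxy⟩ : ∃ x y, ends e = s(x, y) := by
    induction ends e using Sym2.ind with
    | _ x y => exact ⟨x, y, rfl⟩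
  set F := {e' | upd ω e false e' = true} with hF
  set G := {e' | upd ω e true e' = true} with hG
  have hFG : F ⊆ G := by
    intro z hz
    by_cases h : z = e
    · simp [hG, upd, h]
    · simpa [hF, hG, upd, h] using hz
  set a := Quotient.mk α x
  set b := Quotient.mk α y
  have hee : Sym2.map (Quotient.mk α) (ends e) = s(a, b) := by rw [hxy]; rfl
  have main := card_merge_s1 (connSetoid ends α F) (connSetoid ends α G) a b
    (fun u v h => conn_mono ends α hFG h)
    (Relation.EqvGen.rel _ _ ⟨e, by simp [hG, upd], hee⟩)
    (by
      intro u v huv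
      let r := connSetoid ends α F
      change Relation.EqvGen _ u v at huv
      induction huv with
      | rel u v h =>
        obtain ⟨z, hz, hs⟩ := h
        by_cases hze : z = e
        · subst hze
          rw [hee] at hs
          rcases Sym2.eq_iff.1 hs with ⟨rfl, rfl⟩ | ⟨rfl, rfl⟩
          · exact Or.inr (Or.inl ⟨r.refl _, r.refl _⟩)
          · exact Or.inr (Or.inr ⟨r.refl _, r.refl _⟩)
        · left
          exact Relation.EqvGen.rel _ _ ⟨z, by simpa [hF, hG, upd, hze] using hz, hs⟩
      | refl u => exact Or.inl (r.refl _)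
      | symm u v _ ih =>
        rcases ih with h | ⟨h, h'⟩ | ⟨h, h'⟩
        · exact Or.inl (r.symm h)
        · exact Or.inr (Or.inr ⟨r.symm h', r.symm h⟩)
        · exact Or.inr (Or.inl ⟨r.symm h', r.symm h⟩)
      | trans u v t _ _ ih1 ih2 =>
        rcases ih1 with h | ⟨h, h'⟩ | ⟨h, h'⟩ <;> rcases ih2 with k | ⟨k, k'⟩ | ⟨k, k'⟩
        · exact Or.inl (r.trans h k)
        · exact Or.inr (Or.inl ⟨r.trans h k, k'⟩)
        · exact Or.inr (Or.inr ⟨r.trans h k, k'⟩)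
        · exact Or.inr (Or.inl ⟨h, r.trans h' k⟩)
        · exact Or.inr (Or.inl ⟨h, k'⟩)
        · exact Or.inl (r.trans h k')
        · exact Or.inr (Or.inr ⟨h, r.trans h' k⟩)
        · exact Or.inl (r.trans h k')
        · exact Or.inr (Or.inr ⟨h, k'⟩))
  refine ⟨main.1, main.2.1, fun hn => main.2.2 (fun hc => hn ?_)⟩
  intro x' y' h'
  rw [hxy] at h'
  rcases Sym2.eq_iff.1 h' with ⟨rfl, rfl⟩ | ⟨rfl, rfl⟩
  · exact hc
  · exact (connSetoid ends α F).symm hc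

lemma card_prod [Fintype E] (p : ℝ) (ω : E → Bool) :
    p ^ (Finset.univ.filter fun e => ω e = true).card *
    (1 - p) ^ (Finset.univ.filter fun e => ω e = false).card = berWeight (fun _ => p) ω := by
  unfold berWeight
  rw [Finset.prod_ite, Finset.prod_const, Finset.prod_const]
  simp

lemma fk_pair [Fintype V] [Fintype E] (ends : E → Sym2 V) (α : Setoid V) (p q : ℝ)
    (hp : p ∈ Set.Ioo (0 : ℝ) 1) (ω : E → Bool) (e : E) :
    ∃ c : ℝ, 0 ≤ c ∧ ∀ b, fkWeight ends α p q (upd ω e b) =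
      c * (if b = true then p else 1 - p) * q ^ numComponents ends α (upd ω e b) := by
  refine ⟨∏ x ∈ Finset.univ.erase e, if ω x = true then p else 1 - p, ?_, ?_⟩
  · apply Finset.prod_nonneg
    intro x _
    split_ifs
    · exact hp.1.le
    · linarith [hp.2]
  · intro b
    unfold fkWeight
    rw [card_prod, ber_split]
    ring

end Aux

/-- **Proposition 3.1, item 1** (lower enhancement via cutsets, case `p < p'`). -/
theorem below_enhancement_of_lt
    {V E : Type*} [Fintype V] [Fintype E]
    (ends : E → Sym2 V) (α : Setoid V)
    (p q : ℝ) (hp : p ∈ Set.Ioo (0 : ℝ) 1) (hq : 0 < q)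
    (hpp' : p < pPrime p q)
    (Ehat : Set E)
    (hcut : ∀ e ∈ Ehat, ∃ χ : Set E, χ ∈ Cutsets ends α Ehatᶜ e)
    (εhat : E → ℝ)
    (hε : ∀ e, εhat e =
      if e ∈ Ehat then
        (pPrime p q - p) *
          berProb (fun _ => max p (pPrime p q))
            {ω | ∃ χ ∈ Cutsets ends α Ehatᶜ e, ∀ e' ∈ χ, ω e' = false}
      else 0) :
    StochDom (berProb fun e => p + εhat e) (fkProb ends α p q) := by
  obtain ⟨hp0, hp1⟩ := hp
  have hden : 0 < p + q * (1 - p) := by nlinarith [mul_pos hq (sub_pos.2 hp1)]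
  have hp'den : pPrime p q * (p + q * (1 - p)) = p := by
    unfold pPrime; field_simp
  have hp'0 : 0 < pPrime p q := by linarith
  have hp'1 : pPrime p q ≤ 1 := by
    unfold pPrime
    rw [div_le_one hden]
    nlinarith [mul_pos hq (sub_pos.2 hp1)]
  have hq1 : q ≤ 1 := by
    by_contra hcon
    push Not at hcon
    have : (1:ℝ) < p + q * (1 - p) := by nlinarith [mul_pos (sub_pos.2 hcon) (sub_pos.2 hp1)]
    nlinarith
  rw [max_eq_right hpp'.le] at hε
  set p' := pPrime p q with hp'def
  have hp'odds : p * (1 - p') = p' * (q * (1 - p)) := by linarith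
  have hp'01 : ∀ _ : E, 0 ≤ p' ∧ p' ≤ 1 := fun _ => ⟨hp'0.le, hp'1⟩
  set w := fkWeight ends α p q with hw
  let N : E → Set (E → Bool) := fun e =>
    {ω | ∃ χ ∈ Cutsets ends α Ehatᶜ e, ∀ e' ∈ χ, ω e' = false}
  have hbN : ∀ e, 0 ≤ berProb (fun _ => p') (N e) ∧ berProb (fun _ => p') (N e) ≤ 1 :=
    fun e => berProb_mem _ hp'01 _
  have hpe : ∀ e, 0 ≤ p + εhat e ∧ p + εhat e ≤ 1 := by
    intro e
    rw [hε]
    split_ifs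
    · have := hbN e
      have h1 : 0 < p' - p := sub_pos.2 hpp'
      constructor
      · have := mul_nonneg h1.le this.1
        simp only [N] at this
        linarith
      · have := mul_le_mul_of_nonneg_left this.2 h1.le
        simp only [N] at this
        linarith
    · simp [hp0.le, hp1.le]
  -- single edge bounds
  have low : ∀ ω e, p * w (upd ω e false) ≤ (1 - p) * w (upd ω e true) := by
    intro ω e
    obtain ⟨c, hc, hcw⟩ := fk_pair ends α p q ⟨hp0, hp1⟩ ω e
    rw [hw, hcw, hcw]
    simp only [if_true, Bool.false_eq_true, if_false]
    have h := pow_le_pow_of_le_one hq.le hq1 (numComp ends α ω e).1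
    have h2 : 0 ≤ c * p * (1 - p) := mul_nonneg (mul_nonneg hc hp0.le) (by linarith)
    nlinarith [mul_le_mul_of_nonneg_left h h2]
  have high : ∀ ω e, (1 - p') * w (upd ω e true) ≤ p' * w (upd ω e false) := by
    intro ω e
    obtain ⟨c, hc, hcw⟩ := fk_pair ends α p q ⟨hp0, hp1⟩ ω e
    rw [hw, hcw, hcw]
    simp only [if_true, Bool.false_eq_true, if_false]
    have h := pow_le_pow_of_le_one hq.le hq1 (numComp ends α ω e).2.1
    rw [pow_succ] at h
    have h2 : 0 ≤ c * p' * (1 - p) := mul_nonneg (mul_nonneg hc hp'0.le) (by linarith)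
    have h3 := mul_le_mul_of_nonneg_left h h2
    set A := q ^ numComponents ends α (upd ω e true)
    have : (1 - p') * (c * p * A) = c * p' * (1 - p) * (A * q) := by
      linear_combination c * A * hp'odds
    linarith
  have cut : ∀ ω e, ω ∈ N e → p' * w (upd ω e false) ≤ (1 - p') * w (upd ω e true) := by
    rintro ω e ⟨χ, ⟨-, hχ⟩, hcl⟩
    have hn : ¬ EndsConn ends α {e' | upd ω e false e' = true} e := by
      intro hcon
      apply hχ
      intro x y hxy
      refine conn_mono ends α ?_ (hcon x y hxy)
      intro z hz
      have hze : z ≠ e := by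
        rintro rfl
        simp [upd] at hz
      refine ⟨fun hzχ => ?_, hze⟩
      have := hcl z hzχ
      simp [upd, hze, this] at hz
    obtain ⟨c, hc, hcw⟩ := fk_pair ends α p q ⟨hp0, hp1⟩ ω e
    rw [hw, hcw, hcw]
    simp only [if_true, Bool.false_eq_true, if_false]
    have h := pow_le_pow_of_le_one hq.le hq1 ((numComp ends α ω e).2.2 hn)
    rw [pow_succ] at h
    have h2 : 0 ≤ c * p' * (1 - p) := mul_nonneg (mul_nonneg hc hp'0.le) (by linarith)
    have h3 := mul_le_mul_of_nonneg_left h h2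
    set A := q ^ numComponents ends α (upd ω e true)
    have : (1 - p') * (c * p * A) = c * p' * (1 - p) * (A * q) := by
      linear_combination c * A * hp'odds
    linarith
  have hw0 : ∀ ω, 0 < w ω := by
    intro ω
    have h1 : 0 < 1 - p := by linarith
    rw [hw]; unfold fkWeight
    positivity
  let ind : E → (E → Bool) → ℝ := fun e ω => if ω ∈ N e then 1 else 0
  have hindDep : ∀ e, Dep (ind e) Ehatᶜ := by
    intro e ω ω' hω
    have : ω ∈ N e ↔ ω' ∈ N e := by
      constructor
      · rintro ⟨χ, hχ, h⟩
        exact ⟨χ, hχ, fun z hz => by rw [← hω z (hχ.1 hz)]; exact h z hz⟩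
      · rintro ⟨χ, hχ, h⟩
        exact ⟨χ, hχ, fun z hz => by rw [hω z (hχ.1 hz)]; exact h z hz⟩
    simp only [ind, this]
  have hindInc : ∀ e, Inc (fun ω => - ind e ω) := by
    intro e ω ω' hω
    have : ω' ∈ N e → ω ∈ N e := by
      rintro ⟨χ, hχ, h⟩
      refine ⟨χ, hχ, fun z hz => ?_⟩
      have h1 := hω z
      rw [h z hz] at h1
      revert h1; cases ω z <;> simp
    simp only [ind]
    by_cases h1 : ω' ∈ N e
    · simp [h1, this h1]
    · simp only [h1, if_false]
      split_ifs <;> simp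
  -- domination of the exterior
  have ext : ∀ e ∈ Ehat, ∀ D : (E → Bool) → ℝ, (∀ ω, 0 ≤ D ω) → Dep D Ehat →
      berProb (fun _ => p') (N e) * ∑ ω, w ω * D ω ≤ ∑ ω, w ω * D ω * ind e ω := by
    intro e he D hD hdep
    have := key_s1 (fun ω => - (w ω * D ω)) (fun _ => p') hp'01 ∅ (base_empty _ _)
      (Finset.univ.filter (· ∈ Ehatᶜ)) (by
        intro a ha _ D' hD' hdep'
        have haE : a ∉ Ehat := by simpa using ha
        have := pair_le a (fun ω => - w ω) (fun ω => D ω * D' ω) (fun _ => p')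
          (by
            intro ω b
            rw [dep_upd hdep haE, dep_upd hdep' (by simp)])
          (fun _ _ => rfl) (fun ω => mul_nonneg (hD ω) (hD' ω))
          (by intro ω; have := high ω a; linarith)
        rw [← Finset.sum_mul] at this
        simp only [neg_mul, mul_assoc] at this ⊢
        linarith)
      (fun ω => - ind e ω) (hindInc e) (by
        have h := hindDep e
        intro ω ω' hω
        exact congrArg Neg.neg (h ω ω' (fun z hz => hω z (by simpa using hz))))
    rw [berProb_eq]
    simp only [mul_neg, neg_mul, Finset.sum_neg_distrib, neg_neg] at this
    rw [mul_comm]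
    convert this
  intro A hA
  let f : (E → Bool) → ℝ := fun ω => if ω ∈ A then 1 else 0
  have hf : Inc f := by
    intro ω ω' hω
    simp only [f]
    by_cases h1 : ω ∈ A
    · simp [h1, hA h1 hω]
    · simp only [h1, if_false]
      split_ifs <;> simp
  have step1 := key_s1 w (fun e => p + εhat e) hpe ∅ (base_empty _ _)
    (Finset.univ.filter (· ∈ Ehat)) (by
      intro e he _ D hD hdep
      have heE : e ∈ Ehat := by simpa using he
      have hdE : Dep D Ehat := hdep.mono (by intro x hx; simpa using hx.1)
      have h1 := pair_le e w D (fun ω => p + (p' - p) * ind e ω)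
        (fun ω b => dep_upd hdep (by simp) ω b)
        (fun ω b => by
          rw [dep_upd (hindDep e) (by simpa using heE)])
        hD
        (by
          intro ω
          by_cases hN : ω ∈ N e
          · have := cut ω e hN
            simp only [ind, hN, if_true]
            linarith
          · have := low ω e
            simp only [ind, hN, if_false]
            linarith)
      refine le_trans ?_ h1
      have h2 := ext e heE D hD hdE
      have h3 : ∑ ω, w ω * D ω * (p + (p' - p) * ind e ω) =
          p * ∑ ω, w ω * D ω + (p' - p) * ∑ ω, w ω * D ω * ind e ω := by
        rw [Finset.mul_sum, Finset.mul_sum, ← Finset.sum_add_distrib]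
        apply Finset.sum_congr rfl
        intro ω _
        ring
      rw [h3]
      have h4 := mul_le_mul_of_nonneg_left h2 (sub_pos.2 hpp').le
      have h5 : εhat e = (p' - p) * berProb (fun _ => p') (N e) := by
        rw [hε, if_pos heE]
      rw [h5]
      linarith)
  have step2 := key_s1 w (fun e => p + εhat e) hpe Ehat
    (fun g hg hd => step1 g hg (hd.mono (by intro x hx; simpa using hx)))
    Finset.univ (by
      intro e _ he D hD hdep
      have h1 := pair_le e w D (fun _ => p)
        (fun ω b => dep_upd hdep (by simp) ω b) (fun _ _ => rfl) hD (fun ω => low ω e)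
      rw [hε, if_neg he, add_zero, mul_comm, Finset.sum_mul]
      exact h1) f hf (by
        intro ω ω' hω
        have : ω = ω' := funext fun e => hω e (by simp)
        rw [this])
  rw [berProb_eq]
  unfold fkProb probOf
  rw [massOf_univ_s1, massOf_eq_s1]
  rw [le_div_iff₀ (Finset.sum_pos (fun ω _ => hw0 ω) ⟨fun _ => false, Finset.mem_univ _⟩)]
  rw [mul_comm]
  exact step2
end FKPaper
end
end
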